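/- Let φ ∈ Δ be a unit spinor. The fundamental 2-form is computed spinorially: for all x, y ∈ ℝ^6, ω_φ(x,y) = −⟨x·y·φ, j(φ)⟩ = −⟨x·φ, y·(j(φ))⟩; in particular ω_φ is skew-symmetric. -/

import Mathlib

open RealInnerProductSpace

noncomputable section

/-- The spin representation space Δ = ℝ^8. -/
abbrev Δ : Type := EuclideanSpace ℝ (Fin 8)

/-- The standard skew endomorphism E_{ij} of ℝ^8: u_i ↦ u_j, u_j ↦ -u_i, others ↦ 0. -/
def E (i j : Fin 8) : Δ →ₗ[ℝ] Δ where
  toFun v := v i • EuclideanSpace.single j (1 : ℝ) - v j • EuclideanSpace.single i (1 : ℝ)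
  map_add' x y := by
    simp only [PiLp.add_apply, add_smul]
    module
  map_smul' c x := by
    simp only [PiLp.smul_apply, smul_eq_mul, RingHom.id_apply, mul_smul]
    module

/-- The seven Clifford endomorphisms e_1, …, e_7 (indexed 0,…,6). -/
def cliff : Fin 7 → (Δ →ₗ[ℝ] Δ) :=
  ![  E 0 7 + E 1 6 - E 2 5 - E 3 4,
    - E 0 6 + E 1 7 + E 2 4 - E 3 5,
    - E 0 5 + E 1 4 - E 2 7 + E 3 6,
    - E 0 4 - E 1 5 - E 2 6 - E 3 7,
    - E 0 2 - E 1 3 + E 4 6 + E 5 7,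
      E 0 3 - E 1 2 - E 4 7 + E 5 6,
      E 0 1 - E 2 3 - E 4 5 + E 6 7]

/-- j = e_1 ∘ e_2 ∘ e_3 ∘ e_4 ∘ e_5 ∘ e_6. -/
def jmap : Δ →ₗ[ℝ] Δ :=
  cliff 0 ∘ₗ cliff 1 ∘ₗ cliff 2 ∘ₗ cliff 3 ∘ₗ cliff 4 ∘ₗ cliff 5

/-- Clifford multiplication of a vector x ∈ ℝ^6 on a spinor. -/
def cm6 (x : EuclideanSpace ℝ (Fin 6)) (φ : Δ) : Δ :=
  ∑ i : Fin 6, x i • cliff i.castSucc φ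

/-- Clifford multiplication of a vector x ∈ ℝ^7 on a spinor. -/
def cm7 (x : EuclideanSpace ℝ (Fin 7)) (φ : Δ) : Δ :=
  ∑ i : Fin 7, x i • cliff i φ


/-- Standard basis vector of ℝ^6. -/
def v6 (i : Fin 6) : EuclideanSpace ℝ (Fin 6) := EuclideanSpace.single i (1 : ℝ)

/-- The 3-form ψ_φ(x,y,z) = -⟨x·y·z·φ, φ⟩ on ℝ^6. -/
def psiP (φ : Δ) (x y z : EuclideanSpace ℝ (Fin 6)) : ℝ :=
  -⟪cm6 x (cm6 y (cm6 z φ)), φ⟫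

/-- The 3-form ψ_φ⁻(x,y,z) = -⟨x·y·z·φ, j(φ)⟩ on ℝ^6. -/
def psiM (φ : Δ) (x y z : EuclideanSpace ℝ (Fin 6)) : ℝ :=
  -⟪cm6 x (cm6 y (cm6 z φ)), jmap φ⟫

/-- Action of a trilinear form on ℝ^6 on a spinor:
τ·χ := Σ_{i<j<k} τ(v_i,v_j,v_k) e_i(e_j(e_k(χ))). -/
def tact6 (τ : EuclideanSpace ℝ (Fin 6) → EuclideanSpace ℝ (Fin 6) →
    EuclideanSpace ℝ (Fin 6) → ℝ) (χ : Δ) : Δ :=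
  ∑ i : Fin 6, ∑ j : Fin 6, ∑ k : Fin 6,
    if i < j ∧ j < k then
      τ (v6 i) (v6 j) (v6 k) • cliff i.castSucc (cliff j.castSucc (cliff k.castSucc χ))
    else 0

/-- Action of a bilinear form on ℝ^6 on a spinor:
σ·χ := Σ_{i<j} σ(v_i,v_j) e_i(e_j(χ)). -/
def bact6 (σ : EuclideanSpace ℝ (Fin 6) → EuclideanSpace ℝ (Fin 6) → ℝ) (χ : Δ) : Δ :=
  ∑ i : Fin 6, ∑ j : Fin 6,
    if i < j then σ (v6 i) (v6 j) • cliff i.castSucc (cliff j.castSucc χ) else 0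

theorem inner8 (a b : Δ) : ⟪a, b⟫ = b 0 * a 0 + b 1 * a 1 + b 2 * a 2 + b 3 * a 3 + b 4 * a 4
    + b 5 * a 5 + b 6 * a 6 + b 7 * a 7 := by
  simp [PiLp.inner_apply, Fin.sum_univ_eight]

theorem cm6_eq (x : EuclideanSpace ℝ (Fin 6)) (v : Δ) :
    cm6 x v = x 0 • cliff 0 v + x 1 • cliff 1 v + x 2 • cliff 2 v + x 3 • cliff 3 v
      + x 4 • cliff 4 v + x 5 • cliff 5 v := by
  simp only [cm6, Fin.sum_univ_six]
  rfl

theorem c0 (v : Δ) : cliff 0 v = !₂[-v 7, -v 6, v 5, v 4, -v 3, -v 2, v 1, v 0] := by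
  ext k; fin_cases k <;> simp [cliff, E]
theorem c1 (v : Δ) : cliff 1 v = !₂[v 6, -v 7, -v 4, v 5, v 2, -v 3, -v 0, v 1] := by
  ext k; fin_cases k <;> simp [cliff, E]
theorem c2 (v : Δ) : cliff 2 v = !₂[v 5, -v 4, v 7, -v 6, v 1, -v 0, v 3, -v 2] := by
  ext k; fin_cases k <;> simp [cliff, E]
theorem c3 (v : Δ) : cliff 3 v = !₂[v 4, v 5, v 6, v 7, -v 0, -v 1, -v 2, -v 3] := by
  ext k; fin_cases k <;> simp [cliff, E]
theorem c4 (v : Δ) : cliff 4 v = !₂[v 2, v 3, -v 0, -v 1, -v 6, -v 7, v 4, v 5] := by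
  ext k; fin_cases k <;> simp [cliff, E]
theorem c5 (v : Δ) : cliff 5 v = !₂[-v 3, v 2, -v 1, v 0, v 7, -v 6, v 5, -v 4] := by
  ext k; fin_cases k <;> simp [cliff, E]

theorem jmap_skew (a b : Δ) : ⟪a, jmap b⟫ = -⟪jmap a, b⟫ := by
  simp [jmap, c0, c1, c2, c3, c4, c5, inner8]
  ring

theorem cm6_skew (x : EuclideanSpace ℝ (Fin 6)) (a b : Δ) : ⟪cm6 x a, b⟫ = -⟪a, cm6 x b⟫ := by
  simp [cm6_eq, c0, c1, c2, c3, c4, c5, inner8]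
  ring

theorem jmap_cm6 (x : EuclideanSpace ℝ (Fin 6)) (a : Δ) : jmap (cm6 x a) = -cm6 x (jmap a) := by
  ext k
  fin_cases k <;> simp [jmap, cm6_eq, c0, c1, c2, c3, c4, c5] <;> ring

theorem cm6_inner (x y : EuclideanSpace ℝ (Fin 6)) (a : Δ) :
    ⟪cm6 x a, cm6 y a⟫ = ⟪x, y⟫ * ⟪a, a⟫ := by
  rw [inner8, inner8]
  simp [cm6_eq, c0, c1, c2, c3, c4, c5]
  simp [PiLp.inner_apply, Fin.sum_univ_six]
  ring

/-- The fundamental 2-form is computed spinorially: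
ω_φ(x,y) = -⟨x·y·φ, j(φ)⟩ = -⟨x·φ, y·(j(φ))⟩, and ω_φ is skew-symmetric.
Here J_φ is the unique linear map with j(x·φ) = (J_φ x)·φ, and ω_φ(x,y) = ⟨x, J_φ y⟩. -/
theorem omega_spinorial_formula (φ : Δ) (hφ : ⟪φ, φ⟫ = 1)
    (J : EuclideanSpace ℝ (Fin 6) →ₗ[ℝ] EuclideanSpace ℝ (Fin 6))
    (hJ : ∀ x : EuclideanSpace ℝ (Fin 6), jmap (cm6 x φ) = cm6 (J x) φ) :
    ∀ x y : EuclideanSpace ℝ (Fin 6),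
      ⟪x, J y⟫ = -⟪cm6 x (cm6 y φ), jmap φ⟫ ∧
      ⟪x, J y⟫ = -⟪cm6 x φ, cm6 y (jmap φ)⟫ ∧
      ⟪x, J y⟫ = -⟪y, J x⟫ := by
  have key : ∀ x y, ⟪x, J y⟫ = ⟪cm6 x φ, jmap (cm6 y φ)⟫ := by
    intro x y
    rw [hJ, cm6_inner, hφ, mul_one]
  have skew : ∀ x y, ⟪x, J y⟫ = -⟪y, J x⟫ := by
    intro x y
    rw [key, key, jmap_skew, real_inner_comm]
  intro x y
  refine ⟨?_, ?_, skew x y⟩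
  · rw [skew, key, cm6_skew x (cm6 y φ), jmap_cm6, inner_neg_right]
  · rw [key, jmap_cm6, inner_neg_right]

end
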